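/- arXiv:2006.05601 — 2 statements merged into one kernel-verified Lean document; each statement's English description precedes it below -/
import Mathlib

section
/- (Chain yields a strict non-star inequality) Let X_1, X_2, X_3, X_4 be ±1-valued random variables on a standard Borel probability space with Var(X_l) > 0 for all l, forming a Markov chain in this order: for all 1 ≤ i < j < k ≤ 4, X_i and X_k are conditionally independent given the σ-algebra generated by X_j. Let X_l^e = ε_l X_l be noisy versions, where ε_1, …, ε_4 are ±1-valued with P(ε_l = −1) = q_l ∈ [0, 1/2) and ε_1, …, ε_4, (X_1, …, X_4) are mutually independent, and write Σ'_{i,j} = Cov(X_i^e, X_j^e). Then Σ'_{1,3}·Σ'_{2,4}·Var(X_2)·Var(X_3) = Σ'_{1,2}·Σ'_{3,4}·Cov(X_2, X_3)². In particular, if Σ'_{1,2}·Σ'_{3,4} ≠ 0 and |ρ(X_2, X_3)| ≤ ρ_max < 1, then (Σ'_{1,3}Σ'_{2,4})/(Σ'_{1,2}Σ'_{3,4}) = ρ(X_2, X_3)² ≤ ρ_max² < 1. -/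
open MeasureTheory ProbabilityTheory

/-- Covariance `Cov(X,Y) = E[XY] - E[X]E[Y]`. -/
noncomputable def cov {Ω : Type*} [MeasurableSpace Ω] (μ : Measure Ω) (X Y : Ω → ℝ) : ℝ :=
  (∫ ω, X ω * Y ω ∂μ) - (∫ ω, X ω ∂μ) * (∫ ω, Y ω ∂μ)

/-- Variance `Var(X) = Cov(X,X)`. -/
noncomputable def var {Ω : Type*} [MeasurableSpace Ω] (μ : Measure Ω) (X : Ω → ℝ) : ℝ :=
  cov μ X X

/-- Correlation `ρ(X,Y) = Cov(X,Y)/√(Var(X)⬝Var(Y))`. -/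
noncomputable def corr {Ω : Type*} [MeasurableSpace Ω] (μ : Measure Ω) (X Y : Ω → ℝ) : ℝ :=
  cov μ X Y / Real.sqrt (var μ X * var μ Y)

lemma integrable_pm {Ω : Type*} [MeasurableSpace Ω] {μ : Measure Ω} [IsProbabilityMeasure μ]
    {Y : Ω → ℝ} (hY : Measurable Y) (hpm : ∀ᵐ ω ∂μ, Y ω = 1 ∨ Y ω = -1) : Integrable Y μ := by
  refine Integrable.of_bound hY.aestronglyMeasurable 1 ?_
  filter_upwards [hpm] with ω h
  rcases h with h | h <;> simp [h]

lemma condExp_affine {Ω : Type*} [MeasurableSpace Ω] {μ : Measure Ω} [IsProbabilityMeasure μ]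
    {I Y : Ω → ℝ} (hY : Measurable Y) (hpm : ∀ᵐ ω ∂μ, Y ω = 1 ∨ Y ω = -1)
    (hI : Integrable I μ) :
    ∃ a b : ℝ, (μ[I | MeasurableSpace.comap Y inferInstance] =ᵐ[μ] fun ω => a + b * Y ω) ∧
      ∫ ω, I ω ∂μ = a + b * ∫ ω, Y ω ∂μ ∧
      ∫ ω, Y ω * I ω ∂μ = a * (∫ ω, Y ω ∂μ) + b := by
  obtain ⟨g, -, hg⟩ := (stronglyMeasurable_condExp (μ := μ) (f := I)
    (m := MeasurableSpace.comap Y inferInstance)).exists_eq_measurable_comp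
  have hYi := integrable_pm hY hpm
  have hae : μ[I | MeasurableSpace.comap Y inferInstance] =ᵐ[μ]
      fun ω => (g 1 + g (-1)) / 2 + (g 1 - g (-1)) / 2 * Y ω := by
    filter_upwards [hpm] with ω h
    rw [hg]
    rcases h with h | h <;> simp only [Function.comp, h] <;> ring
  refine ⟨_, _, hae, ?_, ?_⟩
  · rw [← integral_condExp hY.comap_le, integral_congr_ae hae,
      integral_add (integrable_const _) (hYi.const_mul _), integral_const_mul]
    simp
  · have h1 : μ[Y * I | MeasurableSpace.comap Y inferInstance] =ᵐ[μ]
        Y * μ[I | MeasurableSpace.comap Y inferInstance] := by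
      refine condExp_stronglyMeasurable_mul_of_bound hY.comap_le
        (comap_measurable Y).stronglyMeasurable hI 1 ?_
      filter_upwards [hpm] with ω h
      rcases h with h | h <;> simp [h]
    have h2 : ∫ ω, Y ω * I ω ∂μ = ∫ ω, (Y * I) ω ∂μ := rfl
    rw [h2, ← integral_condExp hY.comap_le, integral_congr_ae h1]
    have h3 : (Y * μ[I | MeasurableSpace.comap Y inferInstance]) =ᵐ[μ]
        fun ω => (g 1 + g (-1)) / 2 * Y ω + (g 1 - g (-1)) / 2 := by
      filter_upwards [hpm, hae] with ω h h'
      simp only [Pi.mul_apply, h']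
      rcases h with h | h <;> simp only [h] <;> ring
    rw [integral_congr_ae h3, integral_add (hYi.const_mul _) (integrable_const _),
      integral_const_mul]
    simp

lemma cov_chain {Ω : Type*} [MeasurableSpace Ω] [StandardBorelSpace Ω]
    {μ : Measure Ω} [IsProbabilityMeasure μ] {X Y Z : Ω → ℝ}
    (hX : Measurable X) (hY : Measurable Y) (hZ : Measurable Z)
    (hXpm : ∀ᵐ ω ∂μ, X ω = 1 ∨ X ω = -1)
    (hYpm : ∀ᵐ ω ∂μ, Y ω = 1 ∨ Y ω = -1)
    (hZpm : ∀ᵐ ω ∂μ, Z ω = 1 ∨ Z ω = -1)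
    (hci : CondIndepFun (MeasurableSpace.comap Y inferInstance) hY.comap_le X Z μ) :
    cov μ X Z * var μ Y = cov μ X Y * cov μ Y Z := by
  have hs : MeasurableSet (X ⁻¹' {1}) := hX (measurableSet_singleton 1)
  have ht : MeasurableSet (Z ⁻¹' {1}) := hZ (measurableSet_singleton 1)
  have hprod := (condIndepFun_iff_condExp_inter_preimage_eq_mul hX hZ).1 hci {1} {1}
    (measurableSet_singleton 1) (measurableSet_singleton 1)
  set I : Ω → ℝ := (X ⁻¹' {1}).indicator (fun _ => (1 : ℝ)) with hIdef
  set K : Ω → ℝ := (Z ⁻¹' {1}).indicator (fun _ => (1 : ℝ)) with hKdef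
  set J : Ω → ℝ := (X ⁻¹' {1} ∩ Z ⁻¹' {1}).indicator (fun _ => (1 : ℝ)) with hJdef
  have hIi : Integrable I μ := (integrable_const 1).indicator hs
  have hKi : Integrable K μ := (integrable_const 1).indicator ht
  have hJi : Integrable J μ := (integrable_const 1).indicator (hs.inter ht)
  have hYi := integrable_pm hY hYpm
  have hXI : X =ᵐ[μ] fun ω => 2 * I ω - 1 := by
    filter_upwards [hXpm] with ω h
    rcases h with h | h <;> simp [hIdef, Set.indicator, h] <;> norm_num
  have hZK : Z =ᵐ[μ] fun ω => 2 * K ω - 1 := by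
    filter_upwards [hZpm] with ω h
    rcases h with h | h <;> simp [hKdef, Set.indicator, h] <;> norm_num
  have hXZ : (fun ω => X ω * Z ω) =ᵐ[μ] fun ω => 4 * J ω - 2 * I ω - 2 * K ω + 1 := by
    filter_upwards [hXpm, hZpm] with ω h h'
    rcases h with h | h <;> rcases h' with h' | h' <;>
      simp [hIdef, hKdef, hJdef, Set.indicator, h, h'] <;> norm_num
  have hYI : Integrable (fun ω => Y ω * I ω) μ := by
    refine hIi.bdd_mul hY.aestronglyMeasurable (c := 1) ?_
    filter_upwards [hYpm] with ω h
    rcases h with h | h <;> simp [h]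
  have hYK : Integrable (fun ω => Y ω * K ω) μ := by
    refine hKi.bdd_mul hY.aestronglyMeasurable (c := 1) ?_
    filter_upwards [hYpm] with ω h
    rcases h with h | h <;> simp [h]
  have hXY : (fun ω => X ω * Y ω) =ᵐ[μ] fun ω => 2 * (Y ω * I ω) - Y ω := by
    filter_upwards [hXI] with ω h
    rw [h]; ring
  have hYZ : (fun ω => Y ω * Z ω) =ᵐ[μ] fun ω => 2 * (Y ω * K ω) - Y ω := by
    filter_upwards [hZK] with ω h
    rw [h]; ring
  have hYY : (fun ω => Y ω * Y ω) =ᵐ[μ] fun ω => 1 := by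
    filter_upwards [hYpm] with ω h
    rcases h with h | h <;> simp [h]
  obtain ⟨a, b, hu, ha, hb⟩ := condExp_affine hY hYpm hIi
  obtain ⟨c, d, hv, hc, hd⟩ := condExp_affine hY hYpm hKi
  have hJ : ∫ ω, J ω ∂μ = (a * c + b * d) + (a * d + b * c) * ∫ ω, Y ω ∂μ := by
    rw [← integral_condExp hY.comap_le, integral_congr_ae hprod]
    have : (fun ω => (μ[I | MeasurableSpace.comap Y inferInstance]) ω *
        (μ[K | MeasurableSpace.comap Y inferInstance]) ω) =ᵐ[μ]
        fun ω => (a * c + b * d) + (a * d + b * c) * Y ω := by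
      filter_upwards [hu, hv, hYpm] with ω h1 h2 h3
      rw [h1, h2]
      rcases h3 with h | h <;> simp only [h] <;> ring
    rw [integral_congr_ae this, integral_add (integrable_const _) (hYi.const_mul _),
      integral_const_mul]
    simp
  have eX : ∫ ω, X ω ∂μ = 2 * ∫ ω, I ω ∂μ - 1 := by
    rw [integral_congr_ae hXI, integral_sub (hIi.const_mul _) (integrable_const _),
      integral_const_mul]
    simp
  have eZ : ∫ ω, Z ω ∂μ = 2 * ∫ ω, K ω ∂μ - 1 := by
    rw [integral_congr_ae hZK, integral_sub (hKi.const_mul _) (integrable_const _),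
      integral_const_mul]
    simp
  have eXY : ∫ ω, X ω * Y ω ∂μ = 2 * ∫ ω, Y ω * I ω ∂μ - ∫ ω, Y ω ∂μ := by
    rw [integral_congr_ae hXY, integral_sub (hYI.const_mul _) hYi, integral_const_mul]
  have eYZ : ∫ ω, Y ω * Z ω ∂μ = 2 * ∫ ω, Y ω * K ω ∂μ - ∫ ω, Y ω ∂μ := by
    rw [integral_congr_ae hYZ, integral_sub (hYK.const_mul _) hYi, integral_const_mul]
  have eYY : ∫ ω, Y ω * Y ω ∂μ = 1 := by
    rw [integral_congr_ae hYY]; simp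
  have eXZ : ∫ ω, X ω * Z ω ∂μ
      = 4 * ∫ ω, J ω ∂μ - 2 * ∫ ω, I ω ∂μ - 2 * ∫ ω, K ω ∂μ + 1 := by
    rw [integral_congr_ae hXZ, integral_add (by fun_prop) (by fun_prop),
      integral_sub (by fun_prop) (by fun_prop), integral_sub (by fun_prop) (by fun_prop)]
    simp only [integral_const_mul]
    simp
  simp only [var, cov, eX, eZ, eXY, eYZ, eYY, eXZ, hJ, ha, hb, hc, hd]
  ring

lemma cov_noise {Ω : Type*} [MeasurableSpace Ω] {μ : Measure Ω}
    {e f X Z : Ω → ℝ} (he : Measurable e) (hf : Measurable f)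
    (hX : Measurable X) (hZ : Measurable Z) (hef : IndepFun e f μ)
    (h : IndepFun (fun ω => (e ω, f ω)) (fun ω => (X ω, Z ω)) μ) :
    cov μ (fun ω => e ω * X ω) (fun ω => f ω * Z ω)
      = (∫ ω, e ω ∂μ) * (∫ ω, f ω ∂μ) * cov μ X Z := by
  have h1 : IndepFun e X μ := h.comp measurable_fst measurable_fst
  have h2 : IndepFun f Z μ := h.comp measurable_snd measurable_snd
  have h3 : IndepFun (fun ω => e ω * f ω) (fun ω => X ω * Z ω) μ :=
    h.comp (φ := fun p : ℝ × ℝ => p.1 * p.2) (ψ := fun p : ℝ × ℝ => p.1 * p.2)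
      (by fun_prop) (by fun_prop)
  have e1 := h1.integral_fun_mul_eq_mul_integral he.aestronglyMeasurable hX.aestronglyMeasurable
  have e2 := h2.integral_fun_mul_eq_mul_integral hf.aestronglyMeasurable hZ.aestronglyMeasurable
  have e3 := h3.integral_fun_mul_eq_mul_integral (he.mul hf).aestronglyMeasurable
    (hX.mul hZ).aestronglyMeasurable
  have e4 := hef.integral_fun_mul_eq_mul_integral he.aestronglyMeasurable hf.aestronglyMeasurable
  have e5 : ∫ ω, e ω * X ω * (f ω * Z ω) ∂μ = ∫ ω, e ω * f ω * (X ω * Z ω) ∂μ := by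
    congr 1; ext ω; ring
  simp only [cov, e5, e1, e2, e3, e4]
  ring

/-- Chain yields a strict non-star inequality: under the Markov-chain and
independent-flip hypotheses, the noisy covariances satisfy
`Σ'_{1,3} Σ'_{2,4} Var(X_2) Var(X_3) = Σ'_{1,2} Σ'_{3,4} Cov(X_2,X_3)²`; in particular, if
`Σ'_{1,2} Σ'_{3,4} ≠ 0` and `|ρ(X_2,X_3)| ≤ ρ_max < 1`, then
`(Σ'_{1,3}Σ'_{2,4})/(Σ'_{1,2}Σ'_{3,4}) = ρ(X_2,X_3)² ≤ ρ_max² < 1`. -/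
theorem chain_nonstar_inequality {Ω : Type*} [MeasurableSpace Ω] [StandardBorelSpace Ω]
    (μ : Measure Ω) [IsProbabilityMeasure μ]
    (X1 X2 X3 X4 ε1 ε2 ε3 ε4 : Ω → ℝ) (q1 q2 q3 q4 : ℝ)
    (hX1 : Measurable X1) (hX2 : Measurable X2) (hX3 : Measurable X3) (hX4 : Measurable X4)
    (hε1 : Measurable ε1) (hε2 : Measurable ε2) (hε3 : Measurable ε3) (hε4 : Measurable ε4)
    (hX1pm : ∀ᵐ ω ∂μ, X1 ω = 1 ∨ X1 ω = -1)
    (hX2pm : ∀ᵐ ω ∂μ, X2 ω = 1 ∨ X2 ω = -1)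
    (hX3pm : ∀ᵐ ω ∂μ, X3 ω = 1 ∨ X3 ω = -1)
    (hX4pm : ∀ᵐ ω ∂μ, X4 ω = 1 ∨ X4 ω = -1)
    (hε1pm : ∀ᵐ ω ∂μ, ε1 ω = 1 ∨ ε1 ω = -1)
    (hε2pm : ∀ᵐ ω ∂μ, ε2 ω = 1 ∨ ε2 ω = -1)
    (hε3pm : ∀ᵐ ω ∂μ, ε3 ω = 1 ∨ ε3 ω = -1)
    (hε4pm : ∀ᵐ ω ∂μ, ε4 ω = 1 ∨ ε4 ω = -1)
    (hvar1 : 0 < var μ X1) (hvar2 : 0 < var μ X2)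
    (hvar3 : 0 < var μ X3) (hvar4 : 0 < var μ X4)
    -- Markov chain: `X_i ⊥ X_k | σ(X_j)` for all `1 ≤ i < j < k ≤ 4`:
    (hci123 : CondIndepFun (MeasurableSpace.comap X2 inferInstance) hX2.comap_le X1 X3 μ)
    (hci124 : CondIndepFun (MeasurableSpace.comap X2 inferInstance) hX2.comap_le X1 X4 μ)
    (hci134 : CondIndepFun (MeasurableSpace.comap X3 inferInstance) hX3.comap_le X1 X4 μ)
    (hci234 : CondIndepFun (MeasurableSpace.comap X3 inferInstance) hX3.comap_le X2 X4 μ)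
    -- flip probabilities:
    (hq1 : (μ {ω | ε1 ω = -1}).toReal = q1) (hq1' : 0 ≤ q1) (hq1'' : q1 < 1 / 2)
    (hq2 : (μ {ω | ε2 ω = -1}).toReal = q2) (hq2' : 0 ≤ q2) (hq2'' : q2 < 1 / 2)
    (hq3 : (μ {ω | ε3 ω = -1}).toReal = q3) (hq3' : 0 ≤ q3) (hq3'' : q3 < 1 / 2)
    (hq4 : (μ {ω | ε4 ω = -1}).toReal = q4) (hq4' : 0 ≤ q4) (hq4'' : q4 < 1 / 2)
    -- mutual independence of `ε_1, ε_2, ε_3, ε_4, (X_1, X_2, X_3, X_4)`: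
    (hindep1 : IndepFun ε1 ε2 μ)
    (hindep2 : IndepFun (fun ω => (ε1 ω, ε2 ω)) ε3 μ)
    (hindep3 : IndepFun (fun ω => (ε1 ω, ε2 ω, ε3 ω)) ε4 μ)
    (hindep4 : IndepFun (fun ω => (ε1 ω, ε2 ω, ε3 ω, ε4 ω))
      (fun ω => (X1 ω, X2 ω, X3 ω, X4 ω)) μ) :
    cov μ (fun ω => ε1 ω * X1 ω) (fun ω => ε3 ω * X3 ω)
        * cov μ (fun ω => ε2 ω * X2 ω) (fun ω => ε4 ω * X4 ω)
        * var μ X2 * var μ X3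
      = cov μ (fun ω => ε1 ω * X1 ω) (fun ω => ε2 ω * X2 ω)
        * cov μ (fun ω => ε3 ω * X3 ω) (fun ω => ε4 ω * X4 ω)
        * cov μ X2 X3 ^ 2 ∧
    ∀ ρmax : ℝ,
      cov μ (fun ω => ε1 ω * X1 ω) (fun ω => ε2 ω * X2 ω)
          * cov μ (fun ω => ε3 ω * X3 ω) (fun ω => ε4 ω * X4 ω) ≠ 0 →
      |corr μ X2 X3| ≤ ρmax → ρmax < 1 →
      cov μ (fun ω => ε1 ω * X1 ω) (fun ω => ε3 ω * X3 ω)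
          * cov μ (fun ω => ε2 ω * X2 ω) (fun ω => ε4 ω * X4 ω)
          / (cov μ (fun ω => ε1 ω * X1 ω) (fun ω => ε2 ω * X2 ω)
            * cov μ (fun ω => ε3 ω * X3 ω) (fun ω => ε4 ω * X4 ω))
        = corr μ X2 X3 ^ 2
      ∧ corr μ X2 X3 ^ 2 ≤ ρmax ^ 2 ∧ ρmax ^ 2 < 1 := by
  have c13 := cov_noise hε1 hε3 hX1 hX3
    (hindep2.comp measurable_fst measurable_id)
    (hindep4.comp (φ := fun p : ℝ × ℝ × ℝ × ℝ => (p.1, p.2.2.1))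
      (ψ := fun p : ℝ × ℝ × ℝ × ℝ => (p.1, p.2.2.1)) (by fun_prop) (by fun_prop))
  have c24 := cov_noise hε2 hε4 hX2 hX4
    (hindep3.comp (φ := fun p : ℝ × ℝ × ℝ => p.2.1) (by fun_prop) measurable_id)
    (hindep4.comp (φ := fun p : ℝ × ℝ × ℝ × ℝ => (p.2.1, p.2.2.2))
      (ψ := fun p : ℝ × ℝ × ℝ × ℝ => (p.2.1, p.2.2.2)) (by fun_prop) (by fun_prop))
  have c12 := cov_noise hε1 hε2 hX1 hX2 hindep1
    (hindep4.comp (φ := fun p : ℝ × ℝ × ℝ × ℝ => (p.1, p.2.1))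
      (ψ := fun p : ℝ × ℝ × ℝ × ℝ => (p.1, p.2.1)) (by fun_prop) (by fun_prop))
  have c34 := cov_noise hε3 hε4 hX3 hX4
    (hindep3.comp (φ := fun p : ℝ × ℝ × ℝ => p.2.2) (by fun_prop) measurable_id)
    (hindep4.comp (φ := fun p : ℝ × ℝ × ℝ × ℝ => (p.2.2.1, p.2.2.2))
      (ψ := fun p : ℝ × ℝ × ℝ × ℝ => (p.2.2.1, p.2.2.2)) (by fun_prop) (by fun_prop))
  have k1 := cov_chain hX1 hX2 hX3 hX1pm hX2pm hX3pm hci123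
  have k2 := cov_chain hX2 hX3 hX4 hX2pm hX3pm hX4pm hci234
  have main : cov μ (fun ω => ε1 ω * X1 ω) (fun ω => ε3 ω * X3 ω)
        * cov μ (fun ω => ε2 ω * X2 ω) (fun ω => ε4 ω * X4 ω)
        * var μ X2 * var μ X3
      = cov μ (fun ω => ε1 ω * X1 ω) (fun ω => ε2 ω * X2 ω)
        * cov μ (fun ω => ε3 ω * X3 ω) (fun ω => ε4 ω * X4 ω)
        * cov μ X2 X3 ^ 2 := by
    rw [c13, c24, c12, c34]
    linear_combination (∫ ω, ε1 ω ∂μ) * (∫ ω, ε2 ω ∂μ) * (∫ ω, ε3 ω ∂μ) * (∫ ω, ε4 ω ∂μ) *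
      (cov μ X2 X4 * var μ X3 * k1 + cov μ X1 X2 * cov μ X2 X3 * k2)
  refine ⟨main, fun ρmax hne hρ hρ1 => ⟨?_, ?_, ?_⟩⟩
  · have hv : 0 < var μ X2 * var μ X3 := mul_pos hvar2 hvar3
    rw [corr, div_pow, Real.sq_sqrt hv.le, div_eq_div_iff hne hv.ne']
    linear_combination main
  · exact sq_le_sq' (by linarith [neg_abs_le (corr μ X2 X3)]) ((le_abs_self _).trans hρ)
  · have := abs_nonneg (corr μ X2 X3)
    nlinarith
end

section
/- (Star with an external center node) Let X_1, X_2, X_3, X_4 and X_c be ±1-valued random variables on a standard Borel probability space with Var(X_l) > 0 for all of them, such that for all distinct j, k ∈ {1, 2, 3, 4}, X_j and X_k are conditionally independent given the σ-algebra generated by X_c. Let X_l^e = ε_l X_l (l = 1, …, 4) be noisy versions, where ε_1, …, ε_4 are ±1-valued with P(ε_l = −1) = q_l ∈ [0, 1/2) and ε_1, …, ε_4, (X_1, …, X_4, X_c) are mutually independent, and write Σ'_{i,j} = Cov(X_i^e, X_j^e). Then Σ'_{1,3}·Σ'_{2,4} = Σ'_{1,4}·Σ'_{2,3} = Σ'_{1,2}·Σ'_{3,4}.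 -/
open MeasureTheory ProbabilityTheory

theorem aux_affine {Ω : Type*} [MeasurableSpace Ω] (μ : Measure Ω) [IsProbabilityMeasure μ]
    (Xc : Ω → ℝ) (hXcpm : ∀ᵐ ω ∂μ, Xc ω = 1 ∨ Xc ω = -1) (F : Ω → ℝ) :
    ∃ a b : ℝ, μ[F | MeasurableSpace.comap Xc inferInstance] =ᵐ[μ] fun ω => a + b * Xc ω := by
  have h : StronglyMeasurable[MeasurableSpace.comap Xc inferInstance]
    (μ[F | MeasurableSpace.comap Xc inferInstance]) := stronglyMeasurable_condExp
  obtain ⟨g, -, hg⟩ := h.exists_eq_measurable_comp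
  refine ⟨(g 1 + g (-1)) / 2, (g 1 - g (-1)) / 2, ?_⟩
  filter_upwards [hXcpm] with ω hω
  rw [hg]
  simp only [Function.comp]
  rcases hω with h | h <;> rw [h] <;> ring

theorem aux_int {Ω : Type*} [MeasurableSpace Ω] (μ : Measure Ω) [IsProbabilityMeasure μ]
    (Z : Ω → ℝ) (hZ : Measurable Z) (hpm : ∀ᵐ ω ∂μ, Z ω = 1 ∨ Z ω = -1) : Integrable Z μ := by
  refine Integrable.of_bound hZ.aestronglyMeasurable 1 ?_
  filter_upwards [hpm] with ω h
  rcases h with h | h <;> rw [h] <;> simp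

theorem aux_cov {Ω : Type*} [MeasurableSpace Ω] [StandardBorelSpace Ω]
    (μ : Measure Ω) [IsProbabilityMeasure μ] (X Y Xc : Ω → ℝ)
    (hX : Measurable X) (hY : Measurable Y) (hXc : Measurable Xc)
    (hXpm : ∀ᵐ ω ∂μ, X ω = 1 ∨ X ω = -1) (hYpm : ∀ᵐ ω ∂μ, Y ω = 1 ∨ Y ω = -1)
    (hXcpm : ∀ᵐ ω ∂μ, Xc ω = 1 ∨ Xc ω = -1)
    (hci : CondIndepFun (MeasurableSpace.comap Xc inferInstance) hXc.comap_le X Y μ)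
    (a b a' b' : ℝ)
    (h1 : μ⟦X ⁻¹' {1} | MeasurableSpace.comap Xc inferInstance⟧ =ᵐ[μ] fun ω => a + b * Xc ω)
    (h2 : μ⟦Y ⁻¹' {1} | MeasurableSpace.comap Xc inferInstance⟧ =ᵐ[μ] fun ω => a' + b' * Xc ω) :
    cov μ X Y = 4 * (b * b') * var μ Xc := by
  have h3 := (condIndepFun_iff_condExp_inter_preimage_eq_mul hX hY).1 hci {1} {1}
    (measurableSet_singleton _) (measurableSet_singleton _)
  have hA : MeasurableSet (X ⁻¹' {1}) := hX (measurableSet_singleton _)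
  have hB : MeasurableSet (Y ⁻¹' {1}) := hY (measurableSet_singleton _)
  set A := X ⁻¹' {1} with hAdef
  set B := Y ⁻¹' {1} with hBdef
  have iA : Integrable (A.indicator fun _ => (1 : ℝ)) μ := (integrable_const _).indicator hA
  have iB : Integrable (B.indicator fun _ => (1 : ℝ)) μ := (integrable_const _).indicator hB
  have iAB : Integrable ((A ∩ B).indicator fun _ => (1 : ℝ)) μ :=
    (integrable_const _).indicator (hA.inter hB)
  have ic := aux_int μ Xc hXc hXcpm
  have icc : Integrable (fun ω => Xc ω * Xc ω) μ := by
    refine (integrable_const (1 : ℝ)).congr ?_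
    filter_upwards [hXcpm] with ω h
    rcases h with h | h <;> rw [h] <;> simp
  have lin : ∀ c d : ℝ, ∫ ω, (c + d * Xc ω) ∂μ = c + d * ∫ ω, Xc ω ∂μ := by
    intro c d
    rw [integral_add (integrable_const _) (ic.const_mul _), integral_const_mul]
    simp
  have eA : ∫ ω, A.indicator (fun _ => (1 : ℝ)) ω ∂μ = a + b * ∫ ω, Xc ω ∂μ := by
    rw [← integral_condExp hXc.comap_le, integral_congr_ae h1, lin]
  have eB : ∫ ω, B.indicator (fun _ => (1 : ℝ)) ω ∂μ = a' + b' * ∫ ω, Xc ω ∂μ := by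
    rw [← integral_condExp hXc.comap_le, integral_congr_ae h2, lin]
  have eAB : ∫ ω, (A ∩ B).indicator (fun _ => (1 : ℝ)) ω ∂μ
      = a * a' + (a * b' + a' * b) * (∫ ω, Xc ω ∂μ) + b * b' * ∫ ω, Xc ω * Xc ω ∂μ := by
    rw [← integral_condExp hXc.comap_le]
    have : ∀ᵐ ω ∂μ, (μ⟦A ∩ B | MeasurableSpace.comap Xc inferInstance⟧) ω
        = (a * a' + (a * b' + a' * b) * Xc ω) + b * b' * (Xc ω * Xc ω) := by
      filter_upwards [h1, h2, h3] with ω g1 g2 g3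
      rw [g3, g1, g2]; ring
    have il : Integrable (fun ω => a * a' + (a * b' + a' * b) * Xc ω) μ :=
      (integrable_const _).add (ic.const_mul _)
    rw [integral_congr_ae this, integral_add il
      (icc.const_mul _), lin, integral_const_mul]
  have xA : ∀ᵐ ω ∂μ, X ω = 2 * A.indicator (fun _ => (1 : ℝ)) ω - 1 := by
    filter_upwards [hXpm] with ω h
    rcases h with h | h <;> simp [hAdef, Set.indicator, h] <;> norm_num
  have yB : ∀ᵐ ω ∂μ, Y ω = 2 * B.indicator (fun _ => (1 : ℝ)) ω - 1 := by
    filter_upwards [hYpm] with ω h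
    rcases h with h | h <;> simp [hBdef, Set.indicator, h] <;> norm_num
  have xy : ∀ᵐ ω ∂μ, X ω * Y ω = 4 * (A ∩ B).indicator (fun _ => (1 : ℝ)) ω
      - (2 * A.indicator (fun _ => (1 : ℝ)) ω - 1)
      - 2 * B.indicator (fun _ => (1 : ℝ)) ω := by
    filter_upwards [xA, yB] with ω g1 g2
    rw [g1, g2]
    by_cases p : ω ∈ A <;> by_cases q : ω ∈ B <;> simp [Set.indicator, p, q] <;> norm_num
  have EX : ∫ ω, X ω ∂μ = 2 * (∫ ω, A.indicator (fun _ => (1 : ℝ)) ω ∂μ) - 1 := by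
    rw [integral_congr_ae xA, integral_sub (iA.const_mul _) (integrable_const _),
      integral_const_mul]
    simp
  have EY : ∫ ω, Y ω ∂μ = 2 * (∫ ω, B.indicator (fun _ => (1 : ℝ)) ω ∂μ) - 1 := by
    rw [integral_congr_ae yB, integral_sub (iB.const_mul _) (integrable_const _),
      integral_const_mul]
    simp
  have EXY : ∫ ω, X ω * Y ω ∂μ = 4 * (∫ ω, (A ∩ B).indicator (fun _ => (1 : ℝ)) ω ∂μ)
      - (∫ ω, X ω ∂μ) - 2 * (∫ ω, B.indicator (fun _ => (1 : ℝ)) ω ∂μ) := by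
    have i1 : Integrable (fun ω => 2 * A.indicator (fun _ => (1 : ℝ)) ω - 1) μ :=
      (iA.const_mul _).sub (integrable_const _)
    have i2 : Integrable (fun ω => 4 * (A ∩ B).indicator (fun _ => (1 : ℝ)) ω
        - (2 * A.indicator (fun _ => (1 : ℝ)) ω - 1)) μ := (iAB.const_mul _).sub i1
    rw [integral_congr_ae xA, integral_congr_ae xy, integral_sub i2 (iB.const_mul _),
      integral_sub (iAB.const_mul _) i1,
      integral_const_mul, integral_const_mul]
  unfold var cov
  rw [EXY, EX, EY, eAB, eA, eB]
  ring

theorem aux_noise {Ω : Type*} [MeasurableSpace Ω] (μ : Measure Ω) [IsProbabilityMeasure μ]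
    (X Y e d : Ω → ℝ) (hX : Measurable X) (hY : Measurable Y) (he : Measurable e)
    (hd : Measurable d) (hed : IndepFun e d μ)
    (h : IndepFun (fun ω => (e ω, d ω)) (fun ω => (X ω, Y ω)) μ) :
    cov μ (fun ω => e ω * X ω) (fun ω => d ω * Y ω)
      = (∫ ω, e ω ∂μ) * (∫ ω, d ω ∂μ) * cov μ X Y := by
  have g1 : IndepFun e X μ := h.comp measurable_fst measurable_fst
  have g2 : IndepFun d Y μ := h.comp measurable_snd measurable_snd
  have g3 : IndepFun (fun ω => e ω * d ω) (fun ω => X ω * Y ω) μ :=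
    h.comp (φ := fun p : ℝ × ℝ => p.1 * p.2) (ψ := fun p : ℝ × ℝ => p.1 * p.2)
      (by fun_prop) (by fun_prop)
  have k1 := g1.integral_fun_mul_eq_mul_integral he.aestronglyMeasurable hX.aestronglyMeasurable
  have k2 := g2.integral_fun_mul_eq_mul_integral hd.aestronglyMeasurable hY.aestronglyMeasurable
  have k3 := g3.integral_fun_mul_eq_mul_integral (he.mul hd).aestronglyMeasurable
    (hX.mul hY).aestronglyMeasurable
  have k4 := hed.integral_fun_mul_eq_mul_integral he.aestronglyMeasurable hd.aestronglyMeasurable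
  have k5 : ∫ ω, e ω * X ω * (d ω * Y ω) ∂μ = ∫ ω, e ω * d ω * (X ω * Y ω) ∂μ := by
    congr 1; ext ω; ring
  unfold cov
  rw [k5, k3, k4, k1, k2]
  ring

/-- Star with an external center node: if ±1-valued `X_1, X_2, X_3, X_4, X_c`
with positive variances are such that `X_j ⊥ X_k | σ(X_c)` for all distinct `j, k ∈ {1,2,3,4}`,
and `X_l^e = ε_l X_l` (`l = 1, …, 4`) are noisy versions with flip probabilities
`q_l ∈ [0, 1/2)`, where `ε_1, …, ε_4, (X_1, …, X_4, X_c)` are mutually independent, then the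
noisy covariances satisfy `Σ'_{1,3} Σ'_{2,4} = Σ'_{1,4} Σ'_{2,3} = Σ'_{1,2} Σ'_{3,4}`. -/
theorem star_external_equality {Ω : Type*} [MeasurableSpace Ω] [StandardBorelSpace Ω]
    (μ : Measure Ω) [IsProbabilityMeasure μ]
    (X1 X2 X3 X4 Xc ε1 ε2 ε3 ε4 : Ω → ℝ) (q1 q2 q3 q4 : ℝ)
    (hX1 : Measurable X1) (hX2 : Measurable X2) (hX3 : Measurable X3) (hX4 : Measurable X4) (hXc : Measurable Xc)
    (hε1 : Measurable ε1) (hε2 : Measurable ε2) (hε3 : Measurable ε3) (hε4 : Measurable ε4)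
    (hX1pm : ∀ᵐ ω ∂μ, X1 ω = 1 ∨ X1 ω = -1)
    (hX2pm : ∀ᵐ ω ∂μ, X2 ω = 1 ∨ X2 ω = -1)
    (hX3pm : ∀ᵐ ω ∂μ, X3 ω = 1 ∨ X3 ω = -1)
    (hX4pm : ∀ᵐ ω ∂μ, X4 ω = 1 ∨ X4 ω = -1)
    (hXcpm : ∀ᵐ ω ∂μ, Xc ω = 1 ∨ Xc ω = -1)
    (hε1pm : ∀ᵐ ω ∂μ, ε1 ω = 1 ∨ ε1 ω = -1)
    (hε2pm : ∀ᵐ ω ∂μ, ε2 ω = 1 ∨ ε2 ω = -1)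
    (hε3pm : ∀ᵐ ω ∂μ, ε3 ω = 1 ∨ ε3 ω = -1)
    (hε4pm : ∀ᵐ ω ∂μ, ε4 ω = 1 ∨ ε4 ω = -1)
    (hvar1 : 0 < var μ X1) (hvar2 : 0 < var μ X2)
    (hvar3 : 0 < var μ X3) (hvar4 : 0 < var μ X4) (hvarc : 0 < var μ Xc)
    -- star with external center: `X_j ⊥ X_k | σ(X_c)` for all distinct `j, k ∈ {1, 2, 3, 4}`:
    (hci12 : CondIndepFun (MeasurableSpace.comap Xc inferInstance) hXc.comap_le X1 X2 μ)
    (hci13 : CondIndepFun (MeasurableSpace.comap Xc inferInstance) hXc.comap_le X1 X3 μ)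
    (hci14 : CondIndepFun (MeasurableSpace.comap Xc inferInstance) hXc.comap_le X1 X4 μ)
    (hci21 : CondIndepFun (MeasurableSpace.comap Xc inferInstance) hXc.comap_le X2 X1 μ)
    (hci23 : CondIndepFun (MeasurableSpace.comap Xc inferInstance) hXc.comap_le X2 X3 μ)
    (hci24 : CondIndepFun (MeasurableSpace.comap Xc inferInstance) hXc.comap_le X2 X4 μ)
    (hci31 : CondIndepFun (MeasurableSpace.comap Xc inferInstance) hXc.comap_le X3 X1 μ)
    (hci32 : CondIndepFun (MeasurableSpace.comap Xc inferInstance) hXc.comap_le X3 X2 μ)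
    (hci34 : CondIndepFun (MeasurableSpace.comap Xc inferInstance) hXc.comap_le X3 X4 μ)
    (hci41 : CondIndepFun (MeasurableSpace.comap Xc inferInstance) hXc.comap_le X4 X1 μ)
    (hci42 : CondIndepFun (MeasurableSpace.comap Xc inferInstance) hXc.comap_le X4 X2 μ)
    (hci43 : CondIndepFun (MeasurableSpace.comap Xc inferInstance) hXc.comap_le X4 X3 μ)
    -- flip probabilities:
    (hq1 : (μ {ω | ε1 ω = -1}).toReal = q1) (hq1' : 0 ≤ q1) (hq1'' : q1 < 1 / 2)
    (hq2 : (μ {ω | ε2 ω = -1}).toReal = q2) (hq2' : 0 ≤ q2) (hq2'' : q2 < 1 / 2)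
    (hq3 : (μ {ω | ε3 ω = -1}).toReal = q3) (hq3' : 0 ≤ q3) (hq3'' : q3 < 1 / 2)
    (hq4 : (μ {ω | ε4 ω = -1}).toReal = q4) (hq4' : 0 ≤ q4) (hq4'' : q4 < 1 / 2)
    -- mutual independence of `ε_1, ε_2, ε_3, ε_4, (X_1, X_2, X_3, X_4, X_c)`:
    (hindep1 : IndepFun ε1 ε2 μ)
    (hindep2 : IndepFun (fun ω => (ε1 ω, ε2 ω)) ε3 μ)
    (hindep3 : IndepFun (fun ω => (ε1 ω, ε2 ω, ε3 ω)) ε4 μ)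
    (hindep4 : IndepFun (fun ω => (ε1 ω, ε2 ω, ε3 ω, ε4 ω))
      (fun ω => (X1 ω, X2 ω, X3 ω, X4 ω, Xc ω)) μ) :
    cov μ (fun ω => ε1 ω * X1 ω) (fun ω => ε3 ω * X3 ω)
        * cov μ (fun ω => ε2 ω * X2 ω) (fun ω => ε4 ω * X4 ω)
      = cov μ (fun ω => ε1 ω * X1 ω) (fun ω => ε4 ω * X4 ω)
        * cov μ (fun ω => ε2 ω * X2 ω) (fun ω => ε3 ω * X3 ω) ∧
    cov μ (fun ω => ε1 ω * X1 ω) (fun ω => ε4 ω * X4 ω)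
        * cov μ (fun ω => ε2 ω * X2 ω) (fun ω => ε3 ω * X3 ω)
      = cov μ (fun ω => ε1 ω * X1 ω) (fun ω => ε2 ω * X2 ω)
        * cov μ (fun ω => ε3 ω * X3 ω) (fun ω => ε4 ω * X4 ω) := by
  obtain ⟨a1, b1, h1⟩ := aux_affine μ Xc hXcpm ((X1 ⁻¹' {1}).indicator fun _ => (1 : ℝ))
  obtain ⟨a2, b2, h2⟩ := aux_affine μ Xc hXcpm ((X2 ⁻¹' {1}).indicator fun _ => (1 : ℝ))
  obtain ⟨a3, b3, h3⟩ := aux_affine μ Xc hXcpm ((X3 ⁻¹' {1}).indicator fun _ => (1 : ℝ))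
  obtain ⟨a4, b4, h4⟩ := aux_affine μ Xc hXcpm ((X4 ⁻¹' {1}).indicator fun _ => (1 : ℝ))
  have i13 : IndepFun ε1 ε3 μ := hindep2.comp measurable_fst measurable_id
  have i23 : IndepFun ε2 ε3 μ := hindep2.comp measurable_snd measurable_id
  have i14 : IndepFun ε1 ε4 μ := hindep3.comp measurable_fst measurable_id
  have i24 : IndepFun ε2 ε4 μ :=
    hindep3.comp (measurable_fst.comp measurable_snd) measurable_id
  have i34 : IndepFun ε3 ε4 μ :=
    hindep3.comp (measurable_snd.comp measurable_snd) measurable_id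
  have i12 := hindep1
  have c12 := aux_noise μ X1 X2 ε1 ε2 hX1 hX2 hε1 hε2 i12
    (hindep4.comp (φ := fun p : ℝ × ℝ × ℝ × ℝ => (p.1, p.2.1))
      (ψ := fun p : ℝ × ℝ × ℝ × ℝ × ℝ => (p.1, p.2.1)) (by fun_prop) (by fun_prop))
  rw [aux_cov μ X1 X2 Xc hX1 hX2 hXc hX1pm hX2pm hXcpm hci12 a1 b1 a2 b2 h1 h2] at c12
  have c13 := aux_noise μ X1 X3 ε1 ε3 hX1 hX3 hε1 hε3 i13
    (hindep4.comp (φ := fun p : ℝ × ℝ × ℝ × ℝ => (p.1, p.2.2.1))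
      (ψ := fun p : ℝ × ℝ × ℝ × ℝ × ℝ => (p.1, p.2.2.1)) (by fun_prop) (by fun_prop))
  rw [aux_cov μ X1 X3 Xc hX1 hX3 hXc hX1pm hX3pm hXcpm hci13 a1 b1 a3 b3 h1 h3] at c13
  have c14 := aux_noise μ X1 X4 ε1 ε4 hX1 hX4 hε1 hε4 i14
    (hindep4.comp (φ := fun p : ℝ × ℝ × ℝ × ℝ => (p.1, p.2.2.2))
      (ψ := fun p : ℝ × ℝ × ℝ × ℝ × ℝ => (p.1, p.2.2.2.1)) (by fun_prop) (by fun_prop))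
  rw [aux_cov μ X1 X4 Xc hX1 hX4 hXc hX1pm hX4pm hXcpm hci14 a1 b1 a4 b4 h1 h4] at c14
  have c23 := aux_noise μ X2 X3 ε2 ε3 hX2 hX3 hε2 hε3 i23
    (hindep4.comp (φ := fun p : ℝ × ℝ × ℝ × ℝ => (p.2.1, p.2.2.1))
      (ψ := fun p : ℝ × ℝ × ℝ × ℝ × ℝ => (p.2.1, p.2.2.1)) (by fun_prop) (by fun_prop))
  rw [aux_cov μ X2 X3 Xc hX2 hX3 hXc hX2pm hX3pm hXcpm hci23 a2 b2 a3 b3 h2 h3] at c23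
  have c24 := aux_noise μ X2 X4 ε2 ε4 hX2 hX4 hε2 hε4 i24
    (hindep4.comp (φ := fun p : ℝ × ℝ × ℝ × ℝ => (p.2.1, p.2.2.2))
      (ψ := fun p : ℝ × ℝ × ℝ × ℝ × ℝ => (p.2.1, p.2.2.2.1)) (by fun_prop) (by fun_prop))
  rw [aux_cov μ X2 X4 Xc hX2 hX4 hXc hX2pm hX4pm hXcpm hci24 a2 b2 a4 b4 h2 h4] at c24
  have c34 := aux_noise μ X3 X4 ε3 ε4 hX3 hX4 hε3 hε4 i34
    (hindep4.comp (φ := fun p : ℝ × ℝ × ℝ × ℝ => (p.2.2.1, p.2.2.2))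
      (ψ := fun p : ℝ × ℝ × ℝ × ℝ × ℝ => (p.2.2.1, p.2.2.2.1)) (by fun_prop) (by fun_prop))
  rw [aux_cov μ X3 X4 Xc hX3 hX4 hXc hX3pm hX4pm hXcpm hci34 a3 b3 a4 b4 h3 h4] at c34
  rw [c12, c13, c14, c23, c24, c34]
  constructor <;> ring
end
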